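/- (Almost multiplicativity.) If δ₁⁻¹ ∈ ℕ and δ₂⁻¹ ∈ ℕ, then D(δ₁δ₂) ≤ D(δ₁) D(δ₂). -/

import Mathlib

/-!
If `C₁` and `C₂` are admissible constants at scales `δ₁` and `δ₂`, then `C₁ * C₂` is admissible at
scale `δ₁ * δ₂` (`mul_mem_admissible`): decouple `[0, 1]` into intervals of length `δ₁`, then apply
the scale `δ₂` inequality inside each of them after the affine change of variable `ξ = l + δ₁ η`.
The moment curve is invariant under this change up to an invertible linear map of `ℝ³` and a
unimodular factor, so all norms inside one interval are multiplied by one and the same constant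
(`L12_rescale`). This step holds for every density `g`, with no integrability hypothesis.

Taking infima requires the sets of admissible constants at scales `δ₁` and `δ₂` to be nonempty,
since an empty set has infimum `0`. This is not immediate because `L12` is `0` outside `L¹²`: a
piece `E_J g` outside `L¹²` would contribute nothing to the right-hand side. Were the set at scale
`δ₁ * δ₂` empty, its infimum would be `0` and nothing would remain to be proved. If it is nonempty,
then every `g` with `E g ∈ L¹²` has all its pieces of length `δ₁ * δ₂` in `L¹²`
(`cutoffsBounded_of_nonempty`): restrict `g` to the pieces outside `L¹²`; the extension of the
restriction is still in `L¹²`, while the right-hand side of its decoupling inequality is `0`, so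
the extension vanishes, and so does the restriction by injectivity of the Fourier transform.
Longer pieces are sums of these, hence in `L¹²` too, and the triangle inequality then provides
admissible constants at scales `δ₁` and `δ₂`. This replaces the boundedness of the Hilbert
transform on `L¹²`.
-/

open MeasureTheory Real

noncomputable section

/-- Points of `ℝ³`. -/
abbrev E3 := Fin 3 → ℝ

/-- Points of `ℝ²`. -/
abbrev E2 := Fin 2 → ℝ

/-- `eR z = e(z) = exp(2πiz)`. -/
def eR (z : ℝ) : ℂ := Complex.exp (2 * Real.pi * Complex.I * z)

/-- Extension operator along the moment curve `γ(ξ) = (ξ, ξ², ξ³)` over the interval `[l, r]`. -/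
def momExt (g : ℝ → ℂ) (l r : ℝ) (x : E3) : ℂ :=
  ∫ ξ in l..r, g ξ * eR (x 0 * ξ + x 1 * ξ ^ 2 + x 2 * ξ ^ 3)

/-- The `L¹²(ℝ³)` norm. -/
def L12 (f : E3 → ℂ) : ℝ := (∫ x : E3, ‖f x‖ ^ (12 : ℕ)) ^ ((1 : ℝ) / 12)

/-- `∑_{J ∈ P_δ(I)} ‖E_J g‖_{L¹²}⁴` where `I = [l, l + n·δ]` is partitioned into `n` intervals
of length `δ`. -/
def decSum (g : ℝ → ℂ) (l δ : ℝ) (n : ℕ) : ℝ :=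
  ∑ k ∈ Finset.range n, L12 (momExt g (l + k * δ) (l + (k + 1) * δ)) ^ 4

/-- `δ > 0` and `δ⁻¹ ∈ ℕ`. -/
def IsRecipNat (δ : ℝ) : Prop := 0 < δ ∧ ∃ n : ℕ, (n : ℝ) = δ⁻¹

/-- `x ∈ ℕ` (as a real number). -/
def IsNatReal (x : ℝ) : Prop := ∃ n : ℕ, (n : ℝ) = x

/-- The `ℓ⁴L¹²` decoupling constant `D(δ)`: the smallest constant `C` such that
`‖E_{[0,1]} g‖₁₂ ≤ C (∑_{J ∈ P_δ} ‖E_J g‖₁₂⁴)^{1/4}` for all `g`. -/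
def Dconst (δ : ℝ) : ℝ :=
  sInf {C : ℝ | 0 ≤ C ∧ ∀ g : ℝ → ℂ,
    L12 (momExt g 0 1) ≤ C * decSum g 0 δ ⌊δ⁻¹⌋₊ ^ ((1 : ℝ) / 4)}

/-- The weight `φ_{T_I, E}` associated to the parallelepiped `T_I` dual to the interval `I`
with center `c` and length `len`; it is `L¹`-normalized and decays like the `E`-th power of the
non-isotropic distance `‖(len (x·γ'(c)), len² (x·γ''(c)), len³ (x·γ'''(c)))‖`. -/
def phiT (c len E : ℝ) (x : E3) : ℝ :=
  3 / 2 * len ^ 6 *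
    (1 + Real.sqrt ((len * (x 0 + 2 * c * x 1 + 3 * c ^ 2 * x 2)) ^ 2 +
      (len ^ 2 * (2 * x 1 + 6 * c * x 2)) ^ 2 + (len ^ 3 * (6 * x 2)) ^ 2)) ^ (-E)

/-- The convolution `(|E_{[l,r]} g|^p ∗ φ)(x)`. -/
def convPow (g : ℝ → ℂ) (l r : ℝ) (p : ℕ) (φ : E3 → ℝ) (x : E3) : ℝ :=
  ∫ y : E3, ‖momExt g l r y‖ ^ p * φ (x - y)

/-- The bilinear integral `∫_{ℝ³} (|E_I g|^p ∗ φ_{T_I,E}) (|E_{I'} g|^q ∗ φ_{T_{I'},E})`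
where `I = [lI, lI + sI]` and `I' = [lI', lI' + sI']`. -/
def biInt (g : ℝ → ℂ) (p q : ℕ) (lI sI lI' sI' E : ℝ) : ℝ :=
  ∫ x : E3, convPow g lI (lI + sI) p (phiT (lI + sI / 2) sI E) x *
    convPow g lI' (lI' + sI') q (phiT (lI' + sI' / 2) sI' E) x

/-- The intervals `[l₁, l₁+s₁]` and `[l₂, l₂+s₂]` are at distance at least `ν`. -/
def IntSep (l₁ s₁ l₂ s₂ ν : ℝ) : Prop := l₁ + s₁ + ν ≤ l₂ ∨ l₂ + s₂ + ν ≤ l₁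

/-- The first bilinear constant `M_{1,a,b}(δ,ν,E)`: the smallest constant `C` such that
`∫ (|E_I g|² ∗ φ_{T_I,E})(|E_{I'} g|¹⁰ ∗ φ_{T_{I'},E})
  ≤ C¹² (∑_{J ∈ P_δ(I)} ‖E_J g‖₁₂⁴)^{1/2} (∑_{J' ∈ P_δ(I')} ‖E_{J'} g‖₁₂⁴)^{5/2}`
for all `g` and all `I ∈ P_{ν^a}([0,1])`, `I' ∈ P_{ν^b}([0,1])` with `dist(I,I') ≥ ν`. -/
def M1 (δ ν : ℝ) (a b : ℕ) (E : ℝ) : ℝ :=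
  sInf {C : ℝ | 0 ≤ C ∧ ∀ g : ℝ → ℂ, ∀ i j : ℕ,
    i < ⌊ν⁻¹⌋₊ ^ a → j < ⌊ν⁻¹⌋₊ ^ b →
    IntSep (i * ν ^ a) (ν ^ a) (j * ν ^ b) (ν ^ b) ν →
    biInt g 2 10 (i * ν ^ a) (ν ^ a) (j * ν ^ b) (ν ^ b) E ≤
      C ^ 12 * decSum g (i * ν ^ a) δ ⌊ν ^ a / δ⌋₊ ^ ((1 : ℝ) / 2) *
        decSum g (j * ν ^ b) δ ⌊ν ^ b / δ⌋₊ ^ ((5 : ℝ) / 2)}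

/-- The second bilinear constant `M_{2,a,b}(δ,ν,E)`: the smallest constant `C` such that
`∫ (|E_I g|⁴ ∗ φ_{T_I,E})(|E_{I'} g|⁸ ∗ φ_{T_{I'},E})
  ≤ C¹² (∑_{J ∈ P_δ(I)} ‖E_J g‖₁₂⁴) (∑_{J' ∈ P_δ(I')} ‖E_{J'} g‖₁₂⁴)²`
for all `g` and all `I ∈ P_{ν^a}([0,1])`, `I' ∈ P_{ν^b}([0,1])` with `dist(I,I') ≥ ν`. -/
def M2 (δ ν : ℝ) (a b : ℕ) (E : ℝ) : ℝ :=
  sInf {C : ℝ | 0 ≤ C ∧ ∀ g : ℝ → ℂ, ∀ i j : ℕ,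
    i < ⌊ν⁻¹⌋₊ ^ a → j < ⌊ν⁻¹⌋₊ ^ b →
    IntSep (i * ν ^ a) (ν ^ a) (j * ν ^ b) (ν ^ b) ν →
    biInt g 4 8 (i * ν ^ a) (ν ^ a) (j * ν ^ b) (ν ^ b) E ≤
      C ^ 12 * decSum g (i * ν ^ a) δ ⌊ν ^ a / δ⌋₊ *
        decSum g (j * ν ^ b) δ ⌊ν ^ b / δ⌋₊ ^ 2}

/-- `ν ∈ 2^{-2^ℕ}`, i.e. `ν = 2^{-2^k}` for some `k ∈ ℕ`. -/
def IsNu (ν : ℝ) : Prop := ∃ k : ℕ, ν = ((2 : ℝ) ^ (2 ^ k))⁻¹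

/-- Extension operator for the parabola over the interval `[l, r]`. -/
def parExt (g : ℝ → ℂ) (l r : ℝ) (x : E2) : ℂ :=
  ∫ ξ in l..r, g ξ * eR (x 0 * ξ + x 1 * ξ ^ 2)

/-- The weight `w_{B,E}` associated to a ball (or square) in `ℝ²` with center `c` and
radius (resp. side length) `R`. -/
def wB2 (c : E2) (R E : ℝ) (x : E2) : ℝ :=
  (1 + Real.sqrt ((x 0 - c 0) ^ 2 + (x 1 - c 1) ^ 2) / R) ^ (-E)

/-- The weighted `L⁴` norm `(∫_{ℝ²} |f|⁴ w)^{1/4}`. -/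
def L4w (f : E2 → ℂ) (w : E2 → ℝ) : ℝ :=
  (∫ x : E2, ‖f x‖ ^ 4 * w x) ^ ((1 : ℝ) / 4)

/-! ### The extension operator and the `L¹²` norm -/

lemma norm_eR (z : ℝ) : ‖eR z‖ = 1 := by
  have : (2 * Real.pi * Complex.I * z : ℂ) = ((2 * Real.pi * z : ℝ) : ℂ) * Complex.I := by
    push_cast; ring
  rw [eR, this, Complex.norm_exp_ofReal_mul_I]

lemma eR_add (a b : ℝ) : eR (a + b) = eR a * eR b := by
  simp only [eR, ← Complex.exp_add]
  congr 1
  push_cast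
  ring

lemma continuous_eR : Continuous eR := by
  unfold eR
  fun_prop

lemma eR_ne_zero (z : ℝ) : eR z ≠ 0 := Complex.exp_ne_zero _

lemma L12_nonneg (f : E3 → ℂ) : 0 ≤ L12 f := by
  unfold L12
  positivity

lemma decSum_nonneg (g : ℝ → ℂ) (l δ : ℝ) (n : ℕ) : 0 ≤ decSum g l δ n := by
  unfold decSum
  exact Finset.sum_nonneg fun k _ => pow_nonneg (L12_nonneg _) 4

lemma intervalIntegrable_mul_phase {g : ℝ → ℂ} {l r : ℝ} (x : E3)
    (hg : IntervalIntegrable g volume l r) :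
    IntervalIntegrable (fun ξ => g ξ * eR (x 0 * ξ + x 1 * ξ ^ 2 + x 2 * ξ ^ 3)) volume l r := by
  apply hg.mul_continuousOn
  apply Continuous.continuousOn
  exact continuous_eR.comp (by fun_prop)

lemma continuous_momExt {g : ℝ → ℂ} {l r : ℝ} (hg : IntervalIntegrable g volume l r) :
    Continuous (momExt g l r) := by
  unfold momExt
  apply intervalIntegral.continuous_of_dominated_interval (bound := fun ξ => ‖g ξ‖)
  · intro x
    exact (intervalIntegrable_iff.1 (intervalIntegrable_mul_phase x hg)).aestronglyMeasurable
  · intro x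
    refine Filter.Eventually.of_forall fun t _ => ?_
    rw [norm_mul, norm_eR, mul_one]
  · exact hg.norm
  · refine Filter.Eventually.of_forall fun t _ => ?_
    exact continuous_const.mul (continuous_eR.comp (by fun_prop))

/-- For a non-integrable density the extension takes the junk value `0`: multiplication by the
unimodular phase does not affect integrability. -/
lemma momExt_of_not_integrable {g : ℝ → ℂ} {l r : ℝ} (hg : ¬ IntervalIntegrable g volume l r) :
    momExt g l r = 0 := by
  funext x
  apply intervalIntegral.integral_undef
  intro h
  apply hg
  have hc : Continuous fun ξ : ℝ => (eR (x 0 * ξ + x 1 * ξ ^ 2 + x 2 * ξ ^ 3))⁻¹ :=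
    (continuous_eR.comp (by fun_prop)).inv₀ fun ξ => eR_ne_zero _
  have := h.mul_continuousOn hc.continuousOn
  refine this.congr ?_
  intro ξ _
  exact mul_inv_cancel_right₀ (eR_ne_zero _) _

lemma L12_eq_toReal {f : E3 → ℂ} (hf : MemLp f 12 volume) :
    L12 f = (eLpNorm f 12 volume).toReal := by
  rw [hf.eLpNorm_eq_integral_rpow_norm (by norm_num) (by norm_num), ENNReal.toReal_ofReal
    (by positivity), L12]
  norm_num

/-- Outside `L¹²` the quantity `L12` takes the junk value `0`. -/
lemma L12_of_not_memLp {f : E3 → ℂ} (hm : AEStronglyMeasurable f volume)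
    (hf : ¬ MemLp f 12 volume) : L12 f = 0 := by
  rw [L12, integral_undef, Real.zero_rpow (by norm_num)]
  intro h
  apply hf
  rw [← integrable_norm_rpow_iff hm (by norm_num) (by norm_num)]
  refine h.congr (Filter.Eventually.of_forall fun x => ?_)
  rw [ENNReal.toReal_ofNat]
  exact (Real.rpow_ofNat _ 12).symm

lemma L12_zero : L12 (0 : E3 → ℂ) = 0 := by
  rw [L12_eq_toReal MemLp.zero]; simp

/-- The extension over an interval of length `n * s` is the sum of the extensions over its `n`
subintervals of length `s`. -/
lemma momExt_split {g : ℝ → ℂ} {l s : ℝ} (n : ℕ)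
    (hg : ∀ k < n, IntervalIntegrable g volume (l + k * s) (l + (k + 1) * s)) :
    momExt g l (l + n * s) =
      ∑ k ∈ Finset.range n, momExt g (l + k * s) (l + (k + 1) * s) := by
  funext x
  rw [Finset.sum_apply]
  have := intervalIntegral.sum_integral_adjacent_intervals (μ := volume) (n := n)
    (a := fun k : ℕ => l + k * s)
    (f := fun ξ => g ξ * eR (x 0 * ξ + x 1 * ξ ^ 2 + x 2 * ξ ^ 3)) (fun k hk => by
      have := intervalIntegrable_mul_phase x (hg k hk)
      simpa using this)
  simp only [Nat.cast_zero, zero_mul, add_zero, Nat.cast_add, Nat.cast_one] at this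
  exact this.symm

/-! ### Affine rescaling -/

/-- The linear map by which the affine change of variable `ξ = l + s η` acts on `ℝ³`:
`x · γ(l + s η) = x · γ(l) + (rescale l s x) · γ(η)`. -/
def rescale (l s : ℝ) : E3 →ₗ[ℝ] E3 :=
  Matrix.toLin' !![s, 2 * l * s, 3 * l ^ 2 * s; 0, s ^ 2, 3 * l * s ^ 2; 0, 0, s ^ 3]

lemma det_rescale (l s : ℝ) : LinearMap.det (rescale l s) = s ^ 6 := by
  rw [rescale, LinearMap.det_toLin', Matrix.det_fin_three]
  simp
  ring

lemma momExt_rescale (g : ℝ → ℂ) (l s a b : ℝ) (x : E3) :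
    momExt g (l + s * a) (l + s * b) x =
      s * eR (x 0 * l + x 1 * l ^ 2 + x 2 * l ^ 3) *
        momExt (fun η => g (l + s * η)) a b (rescale l s x) := by
  unfold momExt
  rw [add_comm l, add_comm l, ← intervalIntegral.smul_integral_comp_mul_add, mul_assoc,
    ← intervalIntegral.integral_const_mul, Complex.real_smul]
  congr 1
  apply intervalIntegral.integral_congr
  intro η _
  simp only
  rw [add_comm (s * η) l, mul_left_comm, ← eR_add]
  congr 2
  simp [rescale, Matrix.toLin'_apply, Matrix.mulVec, dotProduct, Fin.sum_univ_three]
  ring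

/-- Affine rescaling: up to a factor that depends on the large interval only, the `L¹²` norms of
extensions over subintervals of `[l, l + s]` are those of the rescaled density over the
corresponding subintervals of `[0, 1]`. -/
lemma L12_rescale (l : ℝ) {s : ℝ} (hs : 0 < s) : ∃ c : ℝ, 0 ≤ c ∧ ∀ (g : ℝ → ℂ) (a b : ℝ),
    L12 (momExt g (l + s * a) (l + s * b)) = c * L12 (momExt (fun η => g (l + s * η)) a b) := by
  have hdet : LinearMap.det (rescale l s) ≠ 0 := by
    rw [det_rescale]; positivity
  refine ⟨(s ^ 12 * |(LinearMap.det (rescale l s))⁻¹|) ^ ((1 : ℝ) / 12), by positivity,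
    fun g a b => ?_⟩
  have hemb : MeasurableEmbedding (rescale l s) := by
    have := (LinearEquiv.ofIsUnitDet (f := rescale l s) (v := Pi.basisFun ℝ (Fin 3))
      (v' := Pi.basisFun ℝ (Fin 3)) (by
        rw [← LinearMap.det_toMatrix (Pi.basisFun ℝ (Fin 3))] at hdet
        exact isUnit_iff_ne_zero.2 hdet)).toContinuousLinearEquiv.toHomeomorph.measurableEmbedding
    exact this
  have key : ∫ x : E3, ‖momExt g (l + s * a) (l + s * b) x‖ ^ 12 =
      (s ^ 12 * |(LinearMap.det (rescale l s))⁻¹|) *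
        ∫ x : E3, ‖momExt (fun η => g (l + s * η)) a b x‖ ^ 12 := by
    have h1 : ∀ x : E3, ‖momExt g (l + s * a) (l + s * b) x‖ ^ 12 =
        s ^ 12 * ‖momExt (fun η => g (l + s * η)) a b (rescale l s x)‖ ^ 12 := fun x => by
      rw [momExt_rescale, norm_mul, norm_mul, norm_eR, mul_one, Complex.norm_real,
        Real.norm_of_nonneg hs.le, mul_pow]
    rw [integral_congr_ae (Filter.Eventually.of_forall h1), integral_const_mul,
      ← hemb.integral_map (fun y => ‖momExt (fun η => g (l + s * η)) a b y‖ ^ 12),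
      Measure.map_linearMap_addHaar_eq_smul_addHaar volume hdet, integral_smul_measure,
      ENNReal.toReal_ofReal (abs_nonneg _), smul_eq_mul, mul_assoc]
  rw [L12, L12, key, Real.mul_rpow (mul_nonneg (pow_nonneg hs.le 12) (abs_nonneg _))
    (integral_nonneg fun x => pow_nonneg (norm_nonneg _) 12)]

/-! ### Injectivity -/

open scoped FourierTransform in
/-- Injectivity of the Fourier transform on `L¹(ℝ)`. -/
lemma ae_zero_of_fourier_zero {f : ℝ → ℂ} (hf : Integrable f) (h : ∀ w, 𝓕 f w = 0) :
    f =ᵐ[volume] 0 := by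
  apply ae_eq_zero_of_integral_contDiff_smul_eq_zero hf.locallyIntegrable
  intro φ hφ hφc
  have h1 : HasCompactSupport (fun x => (φ x : ℂ)) := hφc.comp_left (g := Complex.ofReal) rfl
  set ψ : SchwartzMap ℝ ℂ := h1.toSchwartzMap (Complex.ofRealCLM.contDiff.comp hφ)
  set χ : SchwartzMap ℝ ℂ := 𝓕⁻ ψ
  have h3 : 𝓕 χ = ψ := FourierTransform.fourier_fourierInv_eq ψ
  have h4 : ∫ ξ, 𝓕 f ξ • χ ξ = ∫ x, f x • 𝓕 (χ : ℝ → ℂ) x := by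
    simpa using! VectorFourier.integral_fourierIntegral_smul_eq_flip (L := innerₗ ℝ)
      Real.continuous_fourierChar continuous_inner hf (χ.integrable (μ := volume))
  have h5 : ∀ x, φ x • f x = f x • 𝓕 (χ : ℝ → ℂ) x := by
    intro x
    rw [← SchwartzMap.fourier_coe, h3, Complex.real_smul, smul_eq_mul, mul_comm]
    rfl
  rw [integral_congr_ae (Filter.Eventually.of_forall h5), ← h4]
  simp [h]

/-- A density is determined by its extension: restricted to the line `x = (t, 0, 0)`, the extension
operator is the Fourier transform on the interval. -/
lemma ae_zero_of_momExt_zero {g : ℝ → ℂ} (hg : IntervalIntegrable g volume 0 1)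
    (h : momExt g 0 1 = 0) : ∀ᵐ ξ ∂(volume.restrict (Set.Ioc (0 : ℝ) 1)), g ξ = 0 := by
  have hint : Integrable ((Set.Ioc (0 : ℝ) 1).indicator g) := by
    rw [integrable_indicator_iff measurableSet_Ioc]
    exact (intervalIntegrable_iff_integrableOn_Ioc_of_le zero_le_one).1 hg
  have h0 := ae_zero_of_fourier_zero hint (fun w => by
    have hx := congrFun h ![-w, 0, 0]
    rw [momExt, intervalIntegral.integral_of_le zero_le_one,
      ← integral_indicator measurableSet_Ioc, Pi.zero_apply] at hx
    rw [Real.fourier_real_eq_integral_exp_smul, ← hx]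
    congr 1
    funext ξ
    by_cases hξ : ξ ∈ Set.Ioc (0 : ℝ) 1
    · simp only [Set.indicator_of_mem hξ, smul_eq_mul, eR, mul_comm (g ξ)]
      congr 2
      simp
      ring
    · simp [Set.indicator_of_notMem hξ])
  rw [ae_restrict_iff' measurableSet_Ioc]
  filter_upwards [h0] with ξ hξ hmem
  rwa [Set.indicator_of_mem hmem] at hξ

/-- The set of admissible constants for the partition of `[0, 1]` into `n` intervals of length
`δ`. -/
def admissible (δ : ℝ) (n : ℕ) : Set ℝ :=
  {C : ℝ | 0 ≤ C ∧ ∀ g : ℝ → ℂ,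
    L12 (momExt g 0 1) ≤ C * decSum g 0 δ n ^ ((1 : ℝ) / 4)}

/-- The sharp frequency cutoffs to the `n` pieces of length `δ` preserve `L¹²`. -/
def CutoffsBounded (δ : ℝ) (n : ℕ) : Prop :=
  ∀ g : ℝ → ℂ, IntervalIntegrable g volume 0 1 → MemLp (momExt g 0 1) 12 volume →
    ∀ k < n, MemLp (momExt g (0 + k * δ) (0 + (k + 1) * δ)) 12 volume

/-! ### Frequency cutoffs and existence of an admissible constant -/

section Partition

variable {δ : ℝ} {n : ℕ}

lemma piece_subset (hδ : 0 < δ) (hn : n * δ = 1) {k : ℕ} (hk : k < n) :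
    0 ≤ 0 + k * δ ∧ 0 + k * δ ≤ 0 + (k + 1) * δ ∧ 0 + (k + 1) * δ ≤ 1 := by
  have hk' : (k : ℝ) + 1 ≤ n := by exact_mod_cast hk
  refine ⟨by positivity, by linarith, ?_⟩
  rw [zero_add]
  exact (mul_le_mul_of_nonneg_right hk' hδ.le).trans_eq hn

lemma intervalIntegrable_piece (hδ : 0 < δ) (hn : n * δ = 1) {g : ℝ → ℂ}
    (hg : IntervalIntegrable g volume 0 1) {k : ℕ} (hk : k < n) :
    IntervalIntegrable g volume (0 + k * δ) (0 + (k + 1) * δ) := by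
  obtain ⟨h1, h2, h3⟩ := piece_subset hδ hn hk
  apply hg.mono_set
  rw [Set.uIcc_of_le h2, Set.uIcc_of_le zero_le_one]
  exact Set.Icc_subset_Icc h1 h3

lemma momExt_pieces (hδ : 0 < δ) (hn : n * δ = 1) {g : ℝ → ℂ}
    (hg : IntervalIntegrable g volume 0 1) :
    momExt g 0 1 = ∑ k ∈ Finset.range n, momExt g (0 + k * δ) (0 + (k + 1) * δ) := by
  rw [← momExt_split n fun k hk => intervalIntegrable_piece hδ hn hg hk, hn, zero_add]

/-- Once the pieces of every `L¹²` extension are in `L¹²`, the triangle inequality gives an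
admissible constant. -/
lemma admissible_nonempty (hδ : 0 < δ) (hn : n * δ = 1) (h : CutoffsBounded δ n) :
    (admissible δ n).Nonempty := by
  refine ⟨n, Nat.cast_nonneg n, fun g => ?_⟩
  have hR : 0 ≤ (n : ℝ) * decSum g 0 δ n ^ ((1 : ℝ) / 4) :=
    mul_nonneg (Nat.cast_nonneg n) (Real.rpow_nonneg (decSum_nonneg _ _ _ _) _)
  by_cases hg : IntervalIntegrable g volume 0 1
  swap
  · rwa [momExt_of_not_integrable hg, L12_zero]
  by_cases hE : MemLp (momExt g 0 1) 12 volume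
  swap
  · rwa [L12_of_not_memLp (continuous_momExt hg).aestronglyMeasurable hE]
  have hp := h g hg hE
  have htri : L12 (momExt g 0 1) ≤
      ∑ k ∈ Finset.range n, L12 (momExt g (0 + k * δ) (0 + (k + 1) * δ)) := by
    rw [L12_eq_toReal hE, Finset.sum_congr rfl fun k hk => L12_eq_toReal
      (hp k (Finset.mem_range.1 hk)), ← ENNReal.toReal_sum fun k hk =>
      (hp k (Finset.mem_range.1 hk)).eLpNorm_ne_top]
    apply ENNReal.toReal_mono
    · exact ENNReal.sum_ne_top.2 fun k hk => (hp k (Finset.mem_range.1 hk)).eLpNorm_ne_top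
    · rw [momExt_pieces hδ hn hg]
      exact eLpNorm_sum_le (fun k hk => (hp k (Finset.mem_range.1 hk)).aestronglyMeasurable)
        (by norm_num)
  refine htri.trans ?_
  rw [← nsmul_eq_mul]
  nth_rewrite 2 [← Finset.card_range n]
  apply Finset.sum_le_card_nsmul
  intro k hk
  have h4 : L12 (momExt g (0 + k * δ) (0 + (k + 1) * δ)) ^ 4 ≤ decSum g 0 δ n :=
    Finset.single_le_sum
      (f := fun k : ℕ => L12 (momExt g (0 + k * δ) (0 + (k + 1) * δ)) ^ 4)
      (fun j _ => pow_nonneg (L12_nonneg _) 4) hk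
  calc L12 (momExt g (0 + k * δ) (0 + (k + 1) * δ))
      = (L12 (momExt g (0 + k * δ) (0 + (k + 1) * δ)) ^ 4) ^ ((1 : ℝ) / 4) := by
        rw [one_div]
        exact (Real.pow_rpow_inv_natCast (L12_nonneg _) (by norm_num)).symm
    _ ≤ _ := Real.rpow_le_rpow (pow_nonneg (L12_nonneg _) 4) h4 (by norm_num)

/-- If some constant is admissible, the cutoffs preserve `L¹²`. Otherwise keep only the pieces of
`g` whose extension is not in `L¹²`: the total extension stays in `L¹²` while each of its pieces
has `L12 = 0`, so the decoupling inequality kills it, and injectivity of the extension operator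
shows that the pieces kept are `0`. -/
lemma cutoffsBounded_of_nonempty (hδ : 0 < δ) (hn : n * δ = 1)
    (h : (admissible δ n).Nonempty) : CutoffsBounded δ n := by
  classical
  intro g hg hE
  by_contra hcon
  push Not at hcon
  obtain ⟨k₀, hk₀, hbad₀⟩ := hcon
  obtain ⟨C, -, hC⟩ := h
  set bad : ℕ → Prop := fun k => ¬ MemLp (momExt g (0 + k * δ) (0 + (k + 1) * δ)) 12 volume
    with hbad
  set B : Set ℝ := ⋃ k ∈ {k | bad k}, Set.Ioc (0 + k * δ : ℝ) (0 + (k + 1) * δ) with hB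
  have hBm : MeasurableSet B := by
    refine MeasurableSet.biUnion (Set.to_countable _) fun k _ => measurableSet_Ioc
  have hBmem : ∀ (k : ℕ), ∀ ξ ∈ Set.Ioc (0 + k * δ : ℝ) (0 + (k + 1) * δ), ξ ∈ B ↔ bad k := by
    intro k ξ hξ
    constructor
    · intro hmem
      simp only [hB, Set.mem_iUnion, Set.mem_ofPred_eq] at hmem
      obtain ⟨j, hj, hξj⟩ := hmem
      have a1 : (k : ℝ) < j + 1 := by
        have := hξ.1.trans_le hξj.2
        rw [zero_add, zero_add] at this
        exact lt_of_mul_lt_mul_right this hδ.le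
      have a2 : (j : ℝ) < k + 1 := by
        have := hξj.1.trans_le hξ.2
        rw [zero_add, zero_add] at this
        exact lt_of_mul_lt_mul_right this hδ.le
      have a1' : k < j + 1 := by exact_mod_cast a1
      have a2' : j < k + 1 := by exact_mod_cast a2
      have : j = k := by omega
      exact this ▸ hj
    · intro hk
      simp only [hB, Set.mem_iUnion, Set.mem_ofPred_eq]
      exact ⟨k, hk, hξ⟩
  have hgB : IntervalIntegrable (B.indicator g) volume 0 1 := by
    rw [intervalIntegrable_iff] at hg ⊢
    exact hg.indicator hBm
  have hle : ∀ k : ℕ, (0 + k * δ : ℝ) ≤ 0 + (k + 1) * δ := fun k => by nlinarith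
  have hpiece : ∀ k : ℕ, momExt (B.indicator g) (0 + k * δ) (0 + (k + 1) * δ) =
      if bad k then momExt g (0 + k * δ) (0 + (k + 1) * δ) else 0 := by
    intro k
    funext x
    split_ifs with hk
    · rw [momExt, momExt, intervalIntegral.integral_of_le (hle k),
        intervalIntegral.integral_of_le (hle k)]
      refine setIntegral_congr_fun measurableSet_Ioc fun ξ hξ => ?_
      simp only [Set.indicator_of_mem ((hBmem k ξ hξ).2 hk)]
    · rw [momExt, intervalIntegral.integral_of_le (hle k)]
      refine setIntegral_eq_zero_of_forall_eq_zero fun ξ hξ => ?_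
      rw [Set.indicator_of_notMem (mt (hBmem k ξ hξ).1 hk), zero_mul]
  have hdec : decSum (B.indicator g) 0 δ n = 0 := by
    refine Finset.sum_eq_zero fun k hk => ?_
    rw [hpiece k]
    split_ifs with hb
    · rw [L12_of_not_memLp (continuous_momExt (intervalIntegrable_piece hδ hn hg
        (Finset.mem_range.1 hk))).aestronglyMeasurable hb]
      norm_num
    · rw [L12_zero]; norm_num
  have hEB : MemLp (momExt (B.indicator g) 0 1) 12 volume := by
    have hsub : momExt (B.indicator g) 0 1 = momExt g 0 1 - ∑ k ∈ Finset.range n,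
        if bad k then 0 else momExt g (0 + k * δ) (0 + (k + 1) * δ) := by
      rw [momExt_pieces hδ hn hgB, momExt_pieces hδ hn hg, ← Finset.sum_sub_distrib]
      refine Finset.sum_congr rfl fun k _ => ?_
      rw [hpiece k]
      split_ifs <;> simp
    rw [hsub]
    refine hE.sub (memLp_finsetSum' _ fun k _ => ?_)
    split_ifs with hb
    · exact MemLp.zero
    · exact not_not.1 hb
  have hzero : momExt (B.indicator g) 0 1 = 0 := by
    have h1 : L12 (momExt (B.indicator g) 0 1) = 0 := by
      refine le_antisymm ((hC _).trans_eq ?_) (L12_nonneg _)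
      rw [hdec, Real.zero_rpow (by norm_num), mul_zero]
    rw [L12_eq_toReal hEB, ENNReal.toReal_eq_zero_iff, or_iff_left hEB.eLpNorm_ne_top,
      eLpNorm_eq_zero_iff hEB.aestronglyMeasurable (by norm_num)] at h1
    exact ((continuous_momExt hgB).ae_eq_iff_eq volume continuous_zero).1 h1
  have hae := ae_zero_of_momExt_zero hgB hzero
  apply hbad₀
  obtain ⟨h1, h2, h3⟩ := piece_subset hδ hn hk₀
  have hz : momExt g (0 + k₀ * δ) (0 + (k₀ + 1) * δ) = 0 := by
    have := hpiece k₀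
    rw [if_pos hbad₀] at this
    rw [← this]
    funext x
    rw [momExt, intervalIntegral.integral_of_le (hle k₀)]
    apply integral_eq_zero_of_ae
    filter_upwards [ae_restrict_of_ae_restrict_of_subset (Set.Ioc_subset_Ioc h1 h3) hae] with ξ hξ
    simp [hξ]
  rw [hz]
  exact MemLp.zero

end Partition

/-! ### Two-scale decoupling -/

lemma fine_left (k j n₂ : ℕ) {δ₁ δ₂ : ℝ} (h2 : n₂ * δ₂ = 1) :
    (0 + (k : ℝ) * δ₁) + j * (δ₁ * δ₂) = 0 + ((k * n₂ + j : ℕ) : ℝ) * (δ₁ * δ₂) := by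
  push_cast
  linear_combination (-(k : ℝ) * δ₁) * h2

lemma fine_right (k j n₂ : ℕ) {δ₁ δ₂ : ℝ} (h2 : n₂ * δ₂ = 1) :
    (0 + (k : ℝ) * δ₁) + (j + 1) * (δ₁ * δ₂) =
      0 + (((k * n₂ + j : ℕ) : ℝ) + 1) * (δ₁ * δ₂) := by
  push_cast
  linear_combination (-(k : ℝ) * δ₁) * h2

lemma fine_lt {k j n₁ n₂ : ℕ} (hk : k < n₁) (hj : j < n₂) : k * n₂ + j < n₁ * n₂ := by
  calc k * n₂ + j < k * n₂ + n₂ := by omega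
    _ = (k + 1) * n₂ := by ring
    _ ≤ n₁ * n₂ := Nat.mul_le_mul_right _ hk

/-- Boundedness of the cutoffs passes to a coarser partition, each coarse piece being a sum of
fine ones. -/
lemma CutoffsBounded.coarse {δ₁ δ₂ : ℝ} {n₁ n₂ : ℕ} (hδ₁ : 0 < δ₁) (hδ₂ : 0 < δ₂)
    (h1 : n₁ * δ₁ = 1) (h2 : n₂ * δ₂ = 1) (h : CutoffsBounded (δ₁ * δ₂) (n₁ * n₂)) :
    CutoffsBounded δ₁ n₁ := by
  intro g hg hE k hk
  have h12 : ((n₁ * n₂ : ℕ) : ℝ) * (δ₁ * δ₂) = 1 := by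
    push_cast
    linear_combination n₂ * δ₂ * h1 + h2
  have hr : 0 + ((k : ℝ) + 1) * δ₁ = (0 + k * δ₁) + n₂ * (δ₁ * δ₂) := by
    linear_combination (-δ₁) * h2
  rw [hr, momExt_split]
  · refine memLp_finsetSum' _ fun j hj => ?_
    rw [fine_left k j n₂ h2, fine_right k j n₂ h2]
    exact h g hg hE _ (fine_lt hk (Finset.mem_range.1 hj))
  · intro j hj
    rw [fine_left k j n₂ h2, fine_right k j n₂ h2]
    exact intervalIntegrable_piece (by positivity) h12 hg (fine_lt hk hj)

/-- Decoupling at scale `δ₁` followed by rescaled decoupling at scale `δ₂` inside every piece. -/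
lemma mul_mem_admissible {δ₁ δ₂ : ℝ} {n₁ n₂ : ℕ} (hδ₁ : 0 < δ₁)
    (h2 : n₂ * δ₂ = 1) {C₁ C₂ : ℝ}
    (hC₁ : C₁ ∈ admissible δ₁ n₁) (hC₂ : C₂ ∈ admissible δ₂ n₂) :
    C₁ * C₂ ∈ admissible (δ₁ * δ₂) (n₁ * n₂) := by
  refine ⟨mul_nonneg hC₁.1 hC₂.1, fun g => ?_⟩
  have hpiece : ∀ k : ℕ, L12 (momExt g (0 + k * δ₁) (0 + (k + 1) * δ₁)) ^ 4 ≤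
      C₂ ^ 4 * ∑ j ∈ Finset.range n₂, L12 (momExt g
        (0 + ((k * n₂ + j : ℕ) : ℝ) * (δ₁ * δ₂))
        (0 + (((k * n₂ + j : ℕ) : ℝ) + 1) * (δ₁ * δ₂))) ^ 4 := by
    intro k
    obtain ⟨c, hc, hres⟩ := L12_rescale (0 + k * δ₁) hδ₁
    have e0 : momExt g (0 + k * δ₁) (0 + (k + 1) * δ₁) =
        momExt g (0 + k * δ₁ + δ₁ * 0) (0 + k * δ₁ + δ₁ * 1) := by
      congr 1 <;> ring
    have e1 : ∀ j : ℕ, L12 (momExt g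
        (0 + ((k * n₂ + j : ℕ) : ℝ) * (δ₁ * δ₂))
        (0 + (((k * n₂ + j : ℕ) : ℝ) + 1) * (δ₁ * δ₂))) ^ 4 =
        c ^ 4 * L12 (momExt (fun η => g (0 + k * δ₁ + δ₁ * η))
          (0 + j * δ₂) (0 + (j + 1) * δ₂)) ^ 4 := by
      intro j
      rw [← mul_pow, ← hres, ← fine_left k j n₂ h2, ← fine_right k j n₂ h2]
      congr 3 <;> ring
    simp_rw [e1]
    rw [e0, hres, ← Finset.mul_sum]
    set g' : ℝ → ℂ := fun η => g (0 + k * δ₁ + δ₁ * η)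
    have h4 : L12 (momExt g' 0 1) ^ 4 ≤ C₂ ^ 4 * decSum g' 0 δ₂ n₂ := by
      refine (pow_le_pow_left₀ (L12_nonneg _) (hC₂.2 g') 4).trans_eq ?_
      rw [mul_pow, one_div]
      congr 1
      exact Real.rpow_inv_natCast_pow (decSum_nonneg _ _ _ _) (by norm_num)
    calc (c * L12 (momExt g' 0 1)) ^ 4 = c ^ 4 * L12 (momExt g' 0 1) ^ 4 := mul_pow _ _ _
      _ ≤ c ^ 4 * (C₂ ^ 4 * decSum g' 0 δ₂ n₂) := by gcongr
      _ = C₂ ^ 4 * (c ^ 4 * decSum g' 0 δ₂ n₂) := by ring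
  have hsum : decSum g 0 δ₁ n₁ ≤ C₂ ^ 4 * decSum g 0 (δ₁ * δ₂) (n₁ * n₂) := by
    have hreg : decSum g 0 (δ₁ * δ₂) (n₁ * n₂) = ∑ k ∈ Finset.range n₁,
        ∑ j ∈ Finset.range n₂, L12 (momExt g
        (0 + ((k * n₂ + j : ℕ) : ℝ) * (δ₁ * δ₂))
        (0 + (((k * n₂ + j : ℕ) : ℝ) + 1) * (δ₁ * δ₂))) ^ 4 := by
      clear hpiece hC₁
      unfold decSum
      induction n₁ with
      | zero => simp
      | succ m ih => rw [Nat.succ_mul, Finset.sum_range_add, ih, Finset.sum_range_succ]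
    rw [hreg, Finset.mul_sum]
    exact Finset.sum_le_sum fun k _ => hpiece k
  refine (hC₁.2 g).trans ?_
  rw [mul_assoc]
  refine mul_le_mul_of_nonneg_left ?_ hC₁.1
  refine (Real.rpow_le_rpow (decSum_nonneg _ _ _ _) hsum (by norm_num)).trans_eq ?_
  rw [Real.mul_rpow (pow_nonneg hC₂.1 4) (decSum_nonneg _ _ _ _), one_div]
  congr 1
  exact Real.pow_rpow_inv_natCast hC₂.1 (by norm_num)

lemma admissible_bddBelow (δ : ℝ) (n : ℕ) : BddBelow (admissible δ n) := ⟨0, fun _ hC => hC.1⟩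

lemma sInf_admissible_mem {δ : ℝ} {n : ℕ} (h : (admissible δ n).Nonempty) :
    sInf (admissible δ n) ∈ admissible δ n := by
  refine IsClosed.csInf_mem ?_ h (admissible_bddBelow δ n)
  have : admissible δ n = Set.Ici 0 ∩ ⋂ g : ℝ → ℂ, {C : ℝ |
      L12 (momExt g 0 1) ≤ C * decSum g 0 δ n ^ ((1 : ℝ) / 4)} := by
    ext C
    simp [admissible]
  rw [this]
  exact isClosed_Ici.inter (isClosed_iInter fun g =>
    isClosed_le continuous_const (by fun_prop))

/-- **Almost multiplicativity.** If `δ₁⁻¹ ∈ ℕ` and `δ₂⁻¹ ∈ ℕ`, then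
`D(δ₁δ₂) ≤ D(δ₁) D(δ₂)`. -/
theorem Dconst_almost_multiplicative (δ₁ δ₂ : ℝ)
    (h1 : IsRecipNat δ₁) (h2 : IsRecipNat δ₂) :
    Dconst (δ₁ * δ₂) ≤ Dconst δ₁ * Dconst δ₂ := by
  obtain ⟨hδ₁, n₁, hn₁⟩ := h1
  obtain ⟨hδ₂, n₂, hn₂⟩ := h2
  have e1 : n₁ * δ₁ = 1 := by rw [hn₁, inv_mul_cancel₀ hδ₁.ne']
  have e2 : n₂ * δ₂ = 1 := by rw [hn₂, inv_mul_cancel₀ hδ₂.ne']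
  have e12 : ((n₁ * n₂ : ℕ) : ℝ) * (δ₁ * δ₂) = 1 := by
    push_cast
    linear_combination n₂ * δ₂ * e1 + e2
  have D1 : Dconst δ₁ = sInf (admissible δ₁ n₁) := by
    rw [Dconst, ← hn₁, Nat.floor_natCast]; rfl
  have D2 : Dconst δ₂ = sInf (admissible δ₂ n₂) := by
    rw [Dconst, ← hn₂, Nat.floor_natCast]; rfl
  have D12 : Dconst (δ₁ * δ₂) = sInf (admissible (δ₁ * δ₂) (n₁ * n₂)) := by
    rw [Dconst, mul_inv, ← hn₁, ← hn₂, ← Nat.cast_mul, Nat.floor_natCast]; rfl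
  rw [D1, D2, D12]
  rcases (admissible (δ₁ * δ₂) (n₁ * n₂)).eq_empty_or_nonempty with hemp | hne
  ·
    -- An empty set of constants has infimum `0` by convention.
    rw [hemp, Real.sInf_empty]
    exact mul_nonneg (Real.sInf_nonneg fun C hC => hC.1) (Real.sInf_nonneg fun C hC => hC.1)
  · have hcut := cutoffsBounded_of_nonempty (by positivity) e12 hne
    have hcut' : CutoffsBounded (δ₂ * δ₁) (n₂ * n₁) := by
      rwa [mul_comm δ₂, mul_comm n₂]
    have m1 := sInf_admissible_mem
      (admissible_nonempty hδ₁ e1 (hcut.coarse hδ₁ hδ₂ e1 e2))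
    have m2 := sInf_admissible_mem
      (admissible_nonempty hδ₂ e2 (hcut'.coarse hδ₂ hδ₁ e2 e1))
    exact csInf_le (admissible_bddBelow _ _) (mul_mem_admissible hδ₁ e2 m1 m2)
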